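/- Let n ≥ k ≥ 1 and let μ be a function from the k-element subsets of [n]={1,…,n} to the nonnegative reals. For T ⊆ [n] with |T| ≤ k define the induced value μ̄(T) := Σ_{S ⊇ T, |S|=k} μ(S). Let ∅ = S_0 ⊂ S_1 ⊂ ⋯ ⊂ S_k be a greedy chain: for each j, S_{j+1} = S_j ∪ {i_j} where i_j ∉ S_j maximizes μ̄(S_j ∪ {i}) over all i ∉ S_j. Then binom(n,k) · μ(S_k) ≥ max{ μ(S) : S a k-element subset of [n] }. -/

import Mathlib

open Finset

/-- The induced value `μ̄(T) = Σ_{S ⊇ T, |S| = k} μ(S)` of a subset `T` of `[n]`. -/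
noncomputable def inducedVal {n : ℕ} (k : ℕ) (μ : Finset (Fin n) → ℝ)
    (T : Finset (Fin n)) : ℝ :=
  ∑ S ∈ (Finset.univ.powersetCard k).filter (fun S => T ⊆ S), μ S

/-!
Counting pairs `b ∈ S \ T` gives `∑_{b ∉ T} μ̄(T ∪ {b}) = (k - |T|) μ̄(T)`. A greedy choice does
at least as well as the average of these `n - |T|` terms, so step `j` multiplies the induced value
by at least `(k - j) / (n - j)`, and all `k` steps together by at least `1 / binom(n, k)`. The
process starts from the total mass `μ̄(∅) ≥ max μ` and ends at `μ̄(S_k) = μ(S_k)`.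
-/

section InducedVal

variable {n k : ℕ} {μ : Finset (Fin n) → ℝ}

theorem le_inducedVal (hμ : ∀ S, #S = k → 0 ≤ μ S) {S T : Finset (Fin n)} (hTS : T ⊆ S)
    (hS : #S = k) : μ S ≤ inducedVal k μ T :=
  single_le_sum (fun _ hU ↦ hμ _ (mem_powersetCard_univ.mp (mem_filter.mp hU).1))
    (mem_filter.mpr ⟨mem_powersetCard_univ.mpr hS, hTS⟩)

theorem inducedVal_of_card_eq {S : Finset (Fin n)} (hS : #S = k) : inducedVal k μ S = μ S := by
  have hsingleton : (univ.powersetCard k).filter (S ⊆ ·) = {S} := by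
    ext U
    rw [mem_filter, mem_powersetCard_univ, mem_singleton]
    refine ⟨fun ⟨hU, hSU⟩ ↦ (eq_of_subset_of_card_le hSU (hU.trans hS.symm).le).symm, ?_⟩
    rintro rfl
    exact ⟨hS, Subset.rfl⟩
  rw [inducedVal, hsingleton, sum_singleton]

theorem sum_compl_inducedVal_insert (T : Finset (Fin n)) :
    ∑ b ∈ Tᶜ, inducedVal k μ (insert b T) = (k - #T) • inducedVal k μ T := by
  calc ∑ b ∈ Tᶜ, inducedVal k μ (insert b T)
      = ∑ S ∈ (univ.powersetCard k).filter (T ⊆ ·), ∑ _b ∈ S \ T, μ S := by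
        refine sum_comm' fun b S ↦ ?_
        simp only [mem_compl, mem_filter, insert_subset_iff, mem_sdiff]
        tauto
    _ = ∑ S ∈ (univ.powersetCard k).filter (T ⊆ ·), (k - #T) • μ S := by
        refine sum_congr rfl fun S hS ↦ ?_
        obtain ⟨hcard, hTS⟩ := mem_filter.mp hS
        rw [sum_const, card_sdiff_of_subset hTS, mem_powersetCard_univ.mp hcard]
    _ = (k - #T) • inducedVal k μ T := (smul_sum ..).symm

theorem nsmul_inducedVal_le_of_forall_insert_le {T : Finset (Fin n)} {c : ℝ}
    (hc : ∀ b ∉ T, inducedVal k μ (insert b T) ≤ c) :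
    (k - #T) • inducedVal k μ T ≤ (n - #T) • c := by
  rw [← sum_compl_inducedVal_insert]
  simpa only [card_compl, Fintype.card_fin] using
    sum_le_card_nsmul Tᶜ _ c fun b hb ↦ hc b (mem_compl.mp hb)

end InducedVal

/-- The first `k` steps of `Sc` form an induced-greedy chain: starting from `∅`, each step inserts a
new element that maximizes the induced value. The sets `Sc j` with `j > k` are unconstrained. -/
structure IsInducedGreedy {n : ℕ} (k : ℕ) (μ : Finset (Fin n) → ℝ) (Sc : ℕ → Finset (Fin n)) :
    Prop where
  zero : Sc 0 = ∅
  succ : ∀ j < k, ∃ a ∉ Sc j, Sc (j + 1) = insert a (Sc j) ∧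
    ∀ b ∉ Sc j, inducedVal k μ (insert b (Sc j)) ≤ inducedVal k μ (insert a (Sc j))

namespace IsInducedGreedy

variable {n k : ℕ} {μ : Finset (Fin n) → ℝ} {Sc : ℕ → Finset (Fin n)}

theorem card_eq (h : IsInducedGreedy k μ Sc) {j : ℕ} (hj : j ≤ k) : #(Sc j) = j := by
  induction j with
  | zero => rw [h.zero, card_empty]
  | succ j ih =>
    obtain ⟨a, ha, hinsert, -⟩ := h.succ j hj
    rw [hinsert, card_insert_of_notMem ha, ih (Nat.le_of_succ_le hj)]

theorem nsmul_inducedVal_le_succ (h : IsInducedGreedy k μ Sc) {j : ℕ} (hj : j < k) :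
    (k - j) • inducedVal k μ (Sc j) ≤ (n - j) • inducedVal k μ (Sc (j + 1)) := by
  obtain ⟨a, -, hinsert, hmax⟩ := h.succ j hj
  simpa only [hinsert, h.card_eq hj.le] using nsmul_inducedVal_le_of_forall_insert_le hmax

theorem descFactorial_nsmul_inducedVal_empty_le (h : IsInducedGreedy k μ Sc) {j : ℕ}
    (hj : j ≤ k) :
    k.descFactorial j • inducedVal k μ ∅ ≤ n.descFactorial j • inducedVal k μ (Sc j) := by
  induction j with
  | zero => rw [h.zero, Nat.descFactorial_zero, Nat.descFactorial_zero]
  | succ j ih =>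
    calc k.descFactorial (j + 1) • inducedVal k μ ∅
        = (k - j) • k.descFactorial j • inducedVal k μ ∅ := by
          rw [Nat.descFactorial_succ, mul_smul]
      _ ≤ (k - j) • n.descFactorial j • inducedVal k μ (Sc j) :=
          nsmul_le_nsmul_right (ih (Nat.le_of_succ_le hj)) _
      _ = n.descFactorial j • (k - j) • inducedVal k μ (Sc j) := smul_comm ..
      _ ≤ n.descFactorial j • (n - j) • inducedVal k μ (Sc (j + 1)) :=
          nsmul_le_nsmul_right (h.nsmul_inducedVal_le_succ hj) _
      _ = n.descFactorial (j + 1) • inducedVal k μ (Sc (j + 1)) := by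
          rw [Nat.descFactorial_succ, mul_comm, mul_smul]

theorem inducedVal_empty_le (h : IsInducedGreedy k μ Sc) :
    inducedVal k μ ∅ ≤ n.choose k * μ (Sc k) := by
  have hchain := h.descFactorial_nsmul_inducedVal_empty_le le_rfl
  rw [Nat.descFactorial_self, Nat.descFactorial_eq_factorial_mul_choose, mul_smul,
    inducedVal_of_card_eq (h.card_eq le_rfl)] at hchain
  rw [← nsmul_eq_mul]
  exact le_of_nsmul_le_nsmul_right k.factorial_ne_zero hchain

end IsInducedGreedy

/-- INDUCED-GREEDY guarantee: the greedy chain `∅ = S_0 ⊂ S_1 ⊂ ⋯ ⊂ S_k`, where each step adds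
an element maximizing the induced value `μ̄`, ends in a set `S_k` with
`binom(n,k)·μ(S_k) ≥ max μ`. -/
theorem induced_greedy_guarantee
    (n k : ℕ) (hk : 1 ≤ k) (hkn : k ≤ n)
    (μ : Finset (Fin n) → ℝ)
    (hμnonneg : ∀ S : Finset (Fin n), S.card = k → 0 ≤ μ S)
    (Sc : ℕ → Finset (Fin n))
    (h0 : Sc 0 = ∅)
    (hgreedy : ∀ j < k, ∃ a ∉ Sc j, Sc (j + 1) = insert a (Sc j) ∧
      ∀ b ∉ Sc j, inducedVal k μ (insert b (Sc j)) ≤ inducedVal k μ (insert a (Sc j))) :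
    ∀ T : Finset (Fin n), T.card = k →
      μ T ≤ (n.choose k : ℝ) * μ (Sc k) := by
  intro T hT
  have hchain : IsInducedGreedy k μ Sc := ⟨h0, hgreedy⟩
  calc μ T ≤ inducedVal k μ ∅ := le_inducedVal hμnonneg (empty_subset T) hT
    _ ≤ n.choose k * μ (Sc k) := hchain.inducedVal_empty_le
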